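/- Let λ > 0 and let f : ℝ × [−L, L] → ℝ be smooth, 2π-periodic in its first variable, and satisfy (1/cosh²(x))·(f_{xx}(θ,x) + f_{θθ}(θ,x)) + (2/cosh⁴(x))·f(θ,x) = λ·f(θ,x) for all (θ,x), together with the Robin conditions f(θ, L) = L·f_x(θ, L) and f(θ, −L) = −L·f_x(θ, −L) for all θ. Then for every m ∈ ℤ with |m| ≥ 2, the Fourier coefficients (1/(2π))·∫₀^{2π} cos(mθ)·f(θ, x) dθ and (1/(2π))·∫₀^{2π} sin(mθ)·f(θ, x) dθ vanish identically on [−L, L]. -/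

import Mathlib

/-!
Fix `|m| ≥ 2` and let `w` be `cos (mθ)` or `sin (mθ)`. Differentiating under the integral sign and
integrating by parts twice in `θ`, the coefficient `a x = ∫ w θ * f θ x` satisfies
`a'' = (m² + λ cosh² x - 2 / cosh² x) a` with `a (±L) = ±L a' (±L)`.

The function `cosh` is a positive solution of `v'' = v` with `v' / v = tanh`, and
`tanh (±L) = ±1 / L`, so `b = a' - tanh · a` vanishes at `±L`. Moreover
`(a b)' = b² + (m² - 1 + λ cosh² x - 2 / cosh² x) a²`, and the coefficient of `a²` is positive
since `m² - 1 ≥ 3 > 2`. Hence `a b` is monotone and vanishes at both ends, so it is identically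
zero; its derivative then vanishes as well, which forces `a = 0`.

The one-dimensional argument is `robin_ode_eq_zero`; the reduction to it is `mode_eq_zero`, which
relies on the regularity lemmas `contDiffOn_partial_snd` and `hasDerivAt_integral_mul`.
-/

open Real
open Set

/-- The uniqueness statement for a single Fourier mode: the Robin problem
`a'' = (k + λ cosh² - 2 / cosh²) a` with `k ≥ 4`, `λ > 0` has only the zero solution. -/
lemma robin_ode_eq_zero {L lam k : ℝ} (hL : 0 < L) (hL1 : L * Real.tanh L = 1)
    (hlam : 0 < lam) (hk : 4 ≤ k) {a a' a'' : ℝ → ℝ}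
    (hac : ContinuousOn a (Icc (-L) L)) (hac' : ContinuousOn a' (Icc (-L) L))
    (ha : ∀ x ∈ Ioo (-L) L, HasDerivAt a (a' x) x)
    (ha' : ∀ x ∈ Ioo (-L) L, HasDerivAt a' (a'' x) x)
    (hode : ∀ x ∈ Ioo (-L) L,
      a'' x = (k + lam * Real.cosh x ^ 2 - 2 / Real.cosh x ^ 2) * a x)
    (h1 : a L = L * a' L) (h2 : a (-L) = -L * a' (-L)) :
    ∀ x ∈ Icc (-L) L, a x = 0 := by
  have htanh : ∀ x, HasDerivAt Real.tanh (1 / Real.cosh x ^ 2) x := by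
    intro x
    have h := (Real.hasDerivAt_sinh x).div (Real.hasDerivAt_cosh x) (Real.cosh_pos x).ne'
    have e : Real.tanh = fun x => Real.sinh x / Real.cosh x := by
      funext y; exact Real.tanh_eq_sinh_div_cosh y
    rw [e]
    refine h.congr_deriv ?_
    congr 1
    linear_combination Real.cosh_sq x
  have htc : Continuous Real.tanh :=
    continuous_iff_continuousAt.2 fun x => (htanh x).continuousAt
  set b : ℝ → ℝ := fun x => a' x - Real.tanh x * a x with hb
  have hbL : b L = 0 := by
    simp only [hb]; rw [h1]; linear_combination (-a' L) * hL1
  have hbL' : b (-L) = 0 := by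
    simp only [hb]; rw [h2, Real.tanh_neg]; linear_combination (-a' (-L)) * hL1
  have hder : ∀ x ∈ Ioo (-L) L, HasDerivAt (fun x => a x * b x)
      (b x ^ 2 + (k - 1 + lam * Real.cosh x ^ 2 - 2 / Real.cosh x ^ 2) * a x ^ 2) x := by
    intro x hx
    have h := (ha x hx).mul ((ha' x hx).sub ((htanh x).mul (ha x hx)))
    refine h.congr_deriv ?_
    simp only [hb, Pi.sub_apply, Pi.mul_apply]
    rw [hode x hx, Real.tanh_eq_sinh_div_cosh]
    have hc := (Real.cosh_pos x).ne'
    field_simp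
    have := Real.sinh_sq x
    linear_combination (-a x ^ 2) * this
  have hcoef : ∀ x, 0 < k - 1 + lam * Real.cosh x ^ 2 - 2 / Real.cosh x ^ 2 := by
    intro x
    have h1 : 1 ≤ Real.cosh x ^ 2 := one_le_pow₀ (Real.one_le_cosh x)
    have h2 : 2 / Real.cosh x ^ 2 ≤ 2 := div_le_self (by norm_num) h1
    have h3 : 0 < lam * Real.cosh x ^ 2 := by positivity
    linarith
  have hmono : MonotoneOn (fun x => a x * b x) (Icc (-L) L) := by
    refine monotoneOn_of_deriv_nonneg (convex_Icc _ _)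
      (hac.mul (hac'.sub (htc.continuousOn.mul hac))) ?_ ?_
    · intro x hx
      rw [interior_Icc] at hx
      exact (hder x hx).differentiableAt.differentiableWithinAt
    · intro x hx
      rw [interior_Icc] at hx
      rw [(hder x hx).deriv]
      have := hcoef x
      positivity
  have hab : ∀ x ∈ Icc (-L) L, a x * b x = 0 := by
    intro x hx
    have u := hmono (left_mem_Icc.2 (by linarith)) hx hx.1
    have v := hmono hx (right_mem_Icc.2 (by linarith)) hx.2
    simp only [hbL, hbL', mul_zero] at u v
    exact le_antisymm v u
  have hint : EqOn a (fun _ => 0) (Ioo (-L) L) := by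
    intro x hx
    have hev : (fun x => a x * b x) =ᶠ[nhds x] fun _ => 0 := by
      filter_upwards [Ioo_mem_nhds hx.1 hx.2] with y hy
      exact hab y (Ioo_subset_Icc_self hy)
    have h0 := (hder x hx).unique ((hasDerivAt_const x (0 : ℝ)).congr_of_eventuallyEq hev)
    have hc := hcoef x
    by_contra hne
    have : 0 < a x ^ 2 := by positivity
    nlinarith [mul_pos hc this, sq_nonneg (b x)]
  exact hint.of_subset_closure hac continuousOn_const Ioo_subset_Icc_self
    (by rw [closure_Ioo (by linarith)])

/-- The partial derivative in the second variable of a function smooth on a closed strip is smooth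
on that strip, one-sided derivatives being used on the boundary. -/
lemma contDiffOn_partial_snd {L : ℝ} (hL : 0 < L) {g gx : ℝ → ℝ → ℝ}
    (hg : ContDiffOn ℝ (⊤ : ℕ∞) (fun p : ℝ × ℝ => g p.1 p.2) (univ ×ˢ Icc (-L) L))
    (hgx : ∀ θ, ∀ x ∈ Icc (-L) L,
      HasDerivWithinAt (fun t => g θ t) (gx θ x) (Icc (-L) L) x) :
    ContDiffOn ℝ (⊤ : ℕ∞) (fun p : ℝ × ℝ => gx p.1 p.2) (univ ×ˢ Icc (-L) L) := by
  have hI : UniqueDiffOn ℝ (Icc (-L) L) := uniqueDiffOn_Icc (by linarith)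
  have hu : UniqueDiffOn ℝ ((univ : Set ℝ) ×ˢ Icc (-L) L) := uniqueDiffOn_univ.prod hI
  have hF := hg.fderivWithin hu (m := (⊤ : ℕ∞)) (by exact le_of_eq rfl)
  refine (hF.clm_apply (contDiffOn_const (c := ((0 : ℝ), (1 : ℝ))))).congr ?_
  rintro ⟨θ, x⟩ ⟨-, hx⟩
  have hd := (hg.differentiableOn (by simp) (θ, x) ⟨mem_univ _, hx⟩).hasFDerivWithinAt
  have hline : HasDerivWithinAt (fun t : ℝ => (θ, t)) ((0 : ℝ), (1 : ℝ)) (Icc (-L) L) x :=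
    (hasDerivWithinAt_const x _ θ).prodMk (hasDerivWithinAt_id x _)
  have hcomp := hd.comp_hasDerivWithinAt x hline (fun t ht => ⟨mem_univ _, ht⟩)
  exact (hI x hx).eq_deriv _ (hgx θ x hx) hcomp

lemma continuousOn_integral_mul {L : ℝ} (hL : 0 < L) {w : ℝ → ℝ} (hw : Continuous w)
    {g : ℝ → ℝ → ℝ}
    (hg : ContinuousOn (fun p : ℝ × ℝ => g p.1 p.2) (univ ×ˢ Icc (-L) L)) :
    ContinuousOn (fun x => ∫ θ in (0 : ℝ)..(2 * π), w θ * g θ x) (Icc (-L) L) := by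
  have hle : -L ≤ L := by linarith
  -- Clamping the parameter to `[-L, L]` turns the integrand into a globally continuous function.
  have hG : Continuous (fun p : ℝ × ℝ => w p.2 * g p.2 (projIcc (-L) L hle p.1)) := by
    refine (hw.comp continuous_snd).mul ?_
    exact hg.comp_continuous (f := fun p : ℝ × ℝ => (p.2, ((projIcc (-L) L hle p.1 : Icc (-L) L) : ℝ)))
      (continuous_snd.prodMk (continuous_subtype_val.comp
        (continuous_projIcc.comp continuous_fst))) (fun p => ⟨mem_univ _, Subtype.coe_prop _⟩)
  have h := intervalIntegral.continuous_parametric_intervalIntegral_of_continuous'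
    (μ := MeasureTheory.volume)
    (f := fun x θ => w θ * g θ (projIcc (-L) L hle x)) hG 0 (2 * π)
  refine h.continuousOn.congr fun x hx => ?_
  simp only [projIcc_of_mem hle hx]

lemma continuous_slice {L : ℝ} {g : ℝ → ℝ → ℝ}
    (hg : ContinuousOn (fun p : ℝ × ℝ => g p.1 p.2) (univ ×ˢ Icc (-L) L))
    {x : ℝ} (hx : x ∈ Icc (-L) L) : Continuous (fun θ => g θ x) :=
  hg.comp_continuous (f := fun θ : ℝ => (θ, x)) (by fun_prop) (fun _ => ⟨mem_univ _, hx⟩)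

lemma hasDerivAt_integral_mul {L : ℝ} {w : ℝ → ℝ} (hw : Continuous w)
    {g gx : ℝ → ℝ → ℝ}
    (hg : ContinuousOn (fun p : ℝ × ℝ => g p.1 p.2) (univ ×ˢ Icc (-L) L))
    (hgxc : ContinuousOn (fun p : ℝ × ℝ => gx p.1 p.2) (univ ×ˢ Icc (-L) L))
    (hgx : ∀ θ, ∀ x ∈ Icc (-L) L,
      HasDerivWithinAt (fun t => g θ t) (gx θ x) (Icc (-L) L) x)
    {x : ℝ} (hx : x ∈ Ioo (-L) L) :
    HasDerivAt (fun x => ∫ θ in (0 : ℝ)..(2 * π), w θ * g θ x)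
      (∫ θ in (0 : ℝ)..(2 * π), w θ * gx θ x) x := by
  have hK : IsCompact (uIcc (0 : ℝ) (2 * π) ×ˢ Icc (-L) L) := isCompact_uIcc.prod isCompact_Icc
  obtain ⟨C, hC⟩ := hK.exists_bound_of_continuousOn
    (f := fun p : ℝ × ℝ => w p.1 * gx p.1 p.2)
    (((hw.comp continuous_fst).continuousOn).mul
      (hgxc.mono (prod_mono (subset_univ _) subset_rfl)))
  have hcont : ∀ y ∈ Icc (-L) L, Continuous (fun θ => w θ * g θ y) := fun y hy =>
    hw.mul (continuous_slice hg hy)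
  have hxI := Ioo_subset_Icc_self hx
  refine (intervalIntegral.hasDerivAt_integral_of_dominated_loc_of_deriv_le
    (μ := MeasureTheory.volume) (s := Ioo (-L) L)
    (F := fun x θ => w θ * g θ x) (F' := fun x θ => w θ * gx θ x) (bound := fun _ => C)
    (Ioo_mem_nhds hx.1 hx.2) ?_ ?_ ?_ ?_ ?_ ?_).2
  · filter_upwards [Ioo_mem_nhds hx.1 hx.2] with y hy
    exact (hcont y (Ioo_subset_Icc_self hy)).aestronglyMeasurable
  · exact (hcont x hxI).intervalIntegrable _ _
  · exact (hw.mul (continuous_slice hgxc hxI)).aestronglyMeasurable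
  · refine Filter.Eventually.of_forall fun θ hθ y hy => ?_
    exact hC (θ, y) ⟨uIoc_subset_uIcc hθ, Ioo_subset_Icc_self hy⟩
  · exact intervalIntegrable_const
  · refine Filter.Eventually.of_forall fun θ _ y hy => ?_
    exact ((hgx θ y (Ioo_subset_Icc_self hy)).hasDerivAt (Icc_mem_nhds hy.1 hy.2)).const_mul (w θ)

/-- Integrating by parts twice over a period against a periodic solution of `w'' = -k w`. -/
lemma integral_mul_second_deriv {w w' u u' u'' : ℝ → ℝ} {k : ℝ}
    (hw : ∀ θ, HasDerivAt w (w' θ) θ) (hw' : ∀ θ, HasDerivAt w' (-k * w θ) θ)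
    (hwp : w (2 * π) = w 0) (hwp' : w' (2 * π) = w' 0)
    (hu : ∀ θ, HasDerivAt u (u' θ) θ) (hu' : ∀ θ, HasDerivAt u' (u'' θ) θ)
    (huc : Continuous u'') (hup : u (2 * π) = u 0) (hup' : u' (2 * π) = u' 0) :
    ∫ θ in (0 : ℝ)..(2 * π), w θ * u'' θ = -k * ∫ θ in (0 : ℝ)..(2 * π), w θ * u θ := by
  have hwc : Continuous w := continuous_iff_continuousAt.2 fun x => (hw x).continuousAt
  have huc0 : Continuous u := continuous_iff_continuousAt.2 fun x => (hu x).continuousAt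
  -- `w u' - w' u` is a periodic primitive of `w u'' + k w u`.
  have hd : ∀ θ, HasDerivAt (fun t => w t * u' t - w' t * u t) (w θ * u'' θ + k * (w θ * u θ)) θ := by
    intro θ
    refine (((hw θ).mul (hu' θ)).sub ((hw' θ).mul (hu θ))).congr_deriv ?_
    ring
  have h := intervalIntegral.integral_eq_sub_of_hasDerivAt (a := 0) (b := 2 * π)
    (fun θ _ => hd θ) (Continuous.intervalIntegrable (by fun_prop) _ _)
  rw [intervalIntegral.integral_add (Continuous.intervalIntegrable (by fun_prop) _ _)
    (Continuous.intervalIntegrable (by fun_prop) _ _), intervalIntegral.integral_const_mul,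
    hwp, hwp', hup, hup'] at h
  linarith

/-- Vanishing of the coefficient of `f` against any `w` with `w'' = -k w`, `k ≥ 4`, whose values
and first derivatives agree at `0` and `2π`. -/
lemma mode_eq_zero
    (L : ℝ) (hL : 0 < L) (hL1 : L * Real.tanh L = 1)
    (lam : ℝ) (hlam : 0 < lam)
    (f fx fxx fθ fθθ : ℝ → ℝ → ℝ)
    (hsmooth : ContDiffOn ℝ (⊤ : ℕ∞) (fun p : ℝ × ℝ => f p.1 p.2) (Set.univ ×ˢ Set.Icc (-L) L))
    (hper : ∀ θ x, f (θ + 2 * π) x = f θ x)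
    (hfx : ∀ θ, ∀ x ∈ Set.Icc (-L) L,
      HasDerivWithinAt (fun t => f θ t) (fx θ x) (Set.Icc (-L) L) x)
    (hfxx : ∀ θ, ∀ x ∈ Set.Icc (-L) L,
      HasDerivWithinAt (fun t => fx θ t) (fxx θ x) (Set.Icc (-L) L) x)
    (hfθ : ∀ x ∈ Set.Icc (-L) L, ∀ θ : ℝ, HasDerivAt (fun t => f t x) (fθ θ x) θ)
    (hfθθ : ∀ x ∈ Set.Icc (-L) L, ∀ θ : ℝ, HasDerivAt (fun t => fθ t x) (fθθ θ x) θ)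
    (hpde : ∀ θ : ℝ, ∀ x ∈ Set.Icc (-L) L,
      (1 / Real.cosh x ^ 2) * (fxx θ x + fθθ θ x) + (2 / Real.cosh x ^ 4) * f θ x =
        lam * f θ x)
    (hbc1 : ∀ θ : ℝ, f θ L = L * fx θ L)
    (hbc2 : ∀ θ : ℝ, f θ (-L) = -L * fx θ (-L))
    {k : ℝ} (hk : 4 ≤ k) {w w' : ℝ → ℝ}
    (hw : ∀ θ, HasDerivAt w (w' θ) θ) (hw' : ∀ θ, HasDerivAt w' (-k * w θ) θ)
    (hwp : w (2 * π) = w 0) (hwp' : w' (2 * π) = w' 0) :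
    ∀ x ∈ Icc (-L) L, ∫ θ in (0 : ℝ)..(2 * π), w θ * f θ x = 0 := by
  have hwc : Continuous w := continuous_iff_continuousAt.2 fun x => (hw x).continuousAt
  have hsx := contDiffOn_partial_snd hL hsmooth hfx
  have hcf := hsmooth.continuousOn
  have hcx := hsx.continuousOn
  have hcxx := (contDiffOn_partial_snd hL hsx hfxx).continuousOn
  refine robin_ode_eq_zero hL hL1 hlam hk
    (a' := fun x => ∫ θ in (0 : ℝ)..(2 * π), w θ * fx θ x)
    (a'' := fun x => ∫ θ in (0 : ℝ)..(2 * π), w θ * fxx θ x)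
    (continuousOn_integral_mul hL hwc hcf) (continuousOn_integral_mul hL hwc hcx)
    (fun x hx => hasDerivAt_integral_mul hwc hcf hcx hfx hx)
    (fun x hx => hasDerivAt_integral_mul hwc hcx hcxx hfxx hx) ?_ ?_ ?_
  · intro x hx
    have hxI := Ioo_subset_Icc_self hx
    have hf0 := continuous_slice hcf hxI
    have hfxx0 := continuous_slice hcxx hxI
    set c : ℝ := lam * Real.cosh x ^ 2 - 2 / Real.cosh x ^ 2 with hc
    have hpde' : ∀ θ, fθθ θ x = c * f θ x - fxx θ x := by
      intro θ
      have h := hpde θ x hxI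
      have hch := (Real.cosh_pos x).ne'
      rw [hc]
      field_simp at h ⊢
      linear_combination h
    have hfθp : fθ (2 * π) x = fθ 0 x := by
      have h1 := (HasDerivAt.comp_add_const (0 : ℝ) (2 * π) (hfθ x hxI (0 + 2 * π)))
      simp only [hper] at h1
      simpa using h1.unique (hfθ x hxI 0)
    have hparts := integral_mul_second_deriv hw hw' hwp hwp' (hfθ x hxI) (hfθθ x hxI)
      (by simp only [hpde']; fun_prop) (by simpa using hper 0 x) hfθp
    have hsplit : ∫ θ in (0 : ℝ)..(2 * π), w θ * fθθ θ x
        = c * (∫ θ in (0 : ℝ)..(2 * π), w θ * f θ x)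
          - ∫ θ in (0 : ℝ)..(2 * π), w θ * fxx θ x := by
      rw [← intervalIntegral.integral_const_mul, ← intervalIntegral.integral_sub
        (Continuous.intervalIntegrable (by fun_prop) _ _)
        (Continuous.intervalIntegrable (by fun_prop) _ _)]
      congr 1
      funext θ
      rw [hpde' θ]
      ring
    linear_combination hsplit - hparts
  · rw [← intervalIntegral.integral_const_mul]
    congr 1
    funext θ
    rw [hbc1 θ]
    ring
  · rw [← intervalIntegral.integral_const_mul]
    congr 1
    funext θ
    rw [hbc2 θ]
    ring

/-- Higher Fourier modes vanish: if `f` is a smooth, `2π`-periodic-in-`θ` eigenfunction of the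
Jacobi operator of the critical catenoid with eigenvalue `−λ` (`λ > 0`) satisfying the Robin
boundary conditions, then for every `m` with `|m| ≥ 2` the `m`-th cosine and sine Fourier
coefficients of `f` vanish identically on `[-L, L]`. Here `L` is the unique positive real
with `L·tanh L = 1`. -/
theorem higher_fourier_modes_vanish
    (L : ℝ) (hL : 0 < L) (hL1 : L * Real.tanh L = 1)
    (lam : ℝ) (hlam : 0 < lam)
    (f fx fxx fθ fθθ : ℝ → ℝ → ℝ)
    (hsmooth : ContDiffOn ℝ (⊤ : ℕ∞) (fun p : ℝ × ℝ => f p.1 p.2) (Set.univ ×ˢ Set.Icc (-L) L))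
    (hper : ∀ θ x, f (θ + 2 * π) x = f θ x)
    (hfx : ∀ θ, ∀ x ∈ Set.Icc (-L) L,
      HasDerivWithinAt (fun t => f θ t) (fx θ x) (Set.Icc (-L) L) x)
    (hfxx : ∀ θ, ∀ x ∈ Set.Icc (-L) L,
      HasDerivWithinAt (fun t => fx θ t) (fxx θ x) (Set.Icc (-L) L) x)
    (hfθ : ∀ x ∈ Set.Icc (-L) L, ∀ θ : ℝ, HasDerivAt (fun t => f t x) (fθ θ x) θ)
    (hfθθ : ∀ x ∈ Set.Icc (-L) L, ∀ θ : ℝ, HasDerivAt (fun t => fθ t x) (fθθ θ x) θ)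
    (hpde : ∀ θ : ℝ, ∀ x ∈ Set.Icc (-L) L,
      (1 / Real.cosh x ^ 2) * (fxx θ x + fθθ θ x) + (2 / Real.cosh x ^ 4) * f θ x =
        lam * f θ x)
    (hbc1 : ∀ θ : ℝ, f θ L = L * fx θ L)
    (hbc2 : ∀ θ : ℝ, f θ (-L) = -L * fx θ (-L)) :
    ∀ m : ℤ, 2 ≤ |m| →
      ∀ x ∈ Set.Icc (-L) L,
        ((1 / (2 * π)) * ∫ θ in (0:ℝ)..(2 * π), Real.cos (m * θ) * f θ x) = 0 ∧
        ((1 / (2 * π)) * ∫ θ in (0:ℝ)..(2 * π), Real.sin (m * θ) * f θ x) = 0 := by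
  intro m hm x hx
  have hk : (4 : ℝ) ≤ (m : ℝ) ^ 2 := by
    have h : (4 : ℤ) ≤ m ^ 2 := by
      rw [← sq_abs]
      nlinarith
    exact_mod_cast h
  have hlin : ∀ θ : ℝ, HasDerivAt (fun t : ℝ => (m : ℝ) * t) (m : ℝ) θ := fun θ => by
    simpa using (hasDerivAt_id θ).const_mul (m : ℝ)
  have hcos : Real.cos ((m : ℝ) * (2 * π)) = 1 := Real.cos_int_mul_two_pi m
  have hsin : Real.sin ((m : ℝ) * (2 * π)) = 0 := by
    have h := Real.sin_int_mul_pi (m * 2)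
    push_cast at h
    rwa [mul_assoc] at h
  constructor
  · rw [mode_eq_zero L hL hL1 lam hlam f fx fxx fθ fθθ hsmooth hper hfx hfxx hfθ hfθθ hpde
      hbc1 hbc2 hk (w := fun θ => Real.cos (m * θ)) (w' := fun θ => -m * Real.sin (m * θ))
      (fun θ => ((hlin θ).cos).congr_deriv (by ring))
      (fun θ => ((hlin θ).sin.const_mul (-m : ℝ)).congr_deriv (by ring))
      (by simp [hcos]) (by simp [hsin]) x hx, mul_zero]
  · rw [mode_eq_zero L hL hL1 lam hlam f fx fxx fθ fθθ hsmooth hper hfx hfxx hfθ hfθθ hpde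
      hbc1 hbc2 hk (w := fun θ => Real.sin (m * θ)) (w' := fun θ => m * Real.cos (m * θ))
      (fun θ => ((hlin θ).sin).congr_deriv (by ring))
      (fun θ => ((hlin θ).cos.const_mul (m : ℝ)).congr_deriv (by ring))
      (by simp [hsin]) (by simp [hcos]) x hx, mul_zero]
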